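/- Let ν₂(h) := (2·6^{1/3}·√π/Γ(1/3)²)·e^{-8h³/9}·U(1/6, 2/3; 8h³/9) for h ≥ 0. Then for every n ∈ ℕ: ∫₀^∞ hⁿ·ν₂(h) dh = Γ(5/6)·(2·3^{1/3})^{-n}·n!/(Γ(n/3+1)·Γ(n/3+5/6)). In particular (case n = 0), ν₂ is a probability density on [0,∞): ν₂ ≥ 0 and ∫₀^∞ ν₂(h) dh = 1. These are the moments of the height H(1) of the true self-repelling motion at time 1. -/

import Mathlib

open Real MeasureTheory Set Filter Topology

noncomputable section

/-- Confluent hypergeometric function of the second kind (Tricomi function),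
via its integral representation. -/
def tricomiU (a b z : ℝ) : ℝ :=
  (1 / Real.Gamma a) * ∫ s in Ioi (0:ℝ), Real.exp (-z * s) * s ^ (a - 1) * (1 + s) ^ (b - a - 1)

/-- The density of the height `H(1)` of the TSRM at time `1`. -/
def nu2 (h : ℝ) : ℝ :=
  (2 * (6:ℝ) ^ ((1:ℝ)/3) * Real.sqrt π / (Real.Gamma (1/3)) ^ 2) *
    Real.exp (-8 * h ^ 3 / 9) * tricomiU (1/6) (2/3) (8 * h ^ 3 / 9)

lemma swapPos (F : ℝ → ℝ → ℝ) (g : ℝ → ℝ) (hm : Measurable (Function.uncurry F))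
    (h0 : ∀ x > 0, ∀ y > 0, 0 ≤ F x y)
    (hi : ∀ y > 0, IntegrableOn (fun x => F x y) (Ioi 0))
    (hg : ∀ y > 0, ∫ x in Ioi (0:ℝ), F x y = g y) (hgi : IntegrableOn g (Ioi 0)) :
    IntegrableOn (fun x => ∫ y in Ioi (0:ℝ), F x y) (Ioi 0) ∧
    ∫ x in Ioi (0:ℝ), ∫ y in Ioi (0:ℝ), F x y = ∫ y in Ioi (0:ℝ), g y := by
  have hI : Integrable (Function.uncurry F)
      ((volume.restrict (Ioi (0:ℝ))).prod (volume.restrict (Ioi (0:ℝ)))) := by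
    rw [integrable_prod_iff' hm.aestronglyMeasurable]
    constructor
    · filter_upwards [ae_restrict_mem measurableSet_Ioi] with y hy
      exact hi y hy
    · refine hgi.congr ?_
      filter_upwards [ae_restrict_mem measurableSet_Ioi] with y hy
      rw [← hg y hy]
      refine setIntegral_congr_fun measurableSet_Ioi (fun x hx => ?_)
      simp only [Function.uncurry]
      rw [Real.norm_of_nonneg (h0 x hx y hy)]
  refine ⟨hI.integral_prod_left, ?_⟩
  rw [integral_integral_swap hI]
  exact setIntegral_congr_fun measurableSet_Ioi (fun y hy => hg y hy)

lemma betaPos {a p : ℝ} (ha : 0 < a) (hp : a < p) :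
    IntegrableOn (fun s : ℝ => s ^ (a - 1) * (1 + s) ^ (-p)) (Ioi 0) ∧
    ∫ s in Ioi (0:ℝ), s ^ (a - 1) * (1 + s) ^ (-p) =
      Real.Gamma a * Real.Gamma (p - a) / Real.Gamma p := by
  have hp0 : 0 < p := ha.trans hp
  have hG : Real.Gamma p ≠ 0 := (Real.Gamma_pos_of_pos hp0).ne'
  have key := swapPos (fun s t => s ^ (a - 1) * t ^ (p - 1) * Real.exp (-(1 + s) * t))
    (fun t => Real.Gamma a * (t ^ (p - a - 1) * Real.exp (-1 * t ^ (1:ℝ))))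
    (by unfold Function.uncurry; fun_prop)
    (fun x hx y hy => by positivity)
    (fun t ht => by
      refine IntegrableOn.congr_fun ((integrableOn_rpow_mul_exp_neg_mul_rpow (p := 1)
        (s := a - 1) (b := t) (by linarith) one_pos ht).const_mul (t ^ (p - 1) * Real.exp (-t)))
          (fun s hs => ?_) measurableSet_Ioi
      simp only [rpow_one]
      rw [show -(1 + s) * t = -t + -t * s by ring, Real.exp_add]; ring)
    (fun t ht => by
      have h1 := integral_rpow_mul_exp_neg_mul_rpow (p := 1) (q := a - 1) (b := t)
        one_pos (by linarith) ht
      have h2 : ∫ s in Ioi (0:ℝ), s ^ (a - 1) * t ^ (p - 1) * Real.exp (-(1 + s) * t) =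
          ∫ s in Ioi (0:ℝ), (t ^ (p - 1) * Real.exp (-t)) *
            (s ^ (a - 1) * Real.exp (-t * s ^ (1:ℝ))) := by
        refine setIntegral_congr_fun measurableSet_Ioi (fun s hs => ?_)
        simp only [rpow_one]
        rw [show -(1 + s) * t = -t + -t * s by ring, Real.exp_add]; ring
      rw [h2, integral_const_mul, h1, show p - a - 1 = (p - 1) + (-(a - 1 + 1) / 1) by ring,
        Real.rpow_add ht]
      simp only [rpow_one]
      rw [show (a - 1 + 1) / 1 = a by ring, neg_one_mul]
      ring)
    ((integrableOn_rpow_mul_exp_neg_mul_rpow (by linarith) one_pos one_pos).const_mul _)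
  have hin : ∀ s ∈ Ioi (0:ℝ), (∫ t in Ioi (0:ℝ),
      s ^ (a - 1) * t ^ (p - 1) * Real.exp (-(1 + s) * t)) =
      (s ^ (a - 1) * (1 + s) ^ (-p)) * Real.Gamma p := by
    intro s hs
    have hs' : (0:ℝ) < 1 + s := by have : (0:ℝ) < s := hs; linarith
    have h1 := integral_rpow_mul_exp_neg_mul_rpow (p := 1) (q := p - 1) (b := 1 + s)
        one_pos (by linarith) hs'
    simp only [rpow_one] at h1
    simp only [mul_assoc]
    rw [integral_const_mul, h1]
    rw [show (p - 1 + 1) / 1 = p by ring, show -(p - 1 + 1) / 1 = -p by ring]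
    ring
  obtain ⟨k1, k2⟩ := key
  have k1' := (k1.congr_fun hin measurableSet_Ioi).mul_const (Real.Gamma p)⁻¹
  rw [setIntegral_congr_fun measurableSet_Ioi hin, integral_mul_const, integral_const_mul,
    integral_rpow_mul_exp_neg_mul_rpow one_pos (by linarith) one_pos] at k2
  refine ⟨?_, ?_⟩
  · refine IntegrableOn.congr_fun k1' (fun s hs => ?_) measurableSet_Ioi
    field_simp
  · rw [eq_div_iff hG, k2, show (p - a - 1 + 1) / 1 = p - a by ring]
    simp

lemma tripl (n : ℕ) : Real.Gamma (((n:ℝ) + 1) / 3) * Real.Gamma (((n:ℝ) + 2) / 3) *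
    Real.Gamma ((n:ℝ) / 3 + 1) =
    (n.factorial : ℝ) * ((3:ℝ) ^ n)⁻¹ * (Real.Gamma (1/3) * Real.Gamma (2/3)) := by
  induction n with
  | zero => simp
  | succ n ih =>
    have h : Real.Gamma (((n + 1 : ℕ) : ℝ) / 3 + 1) =
        ((n:ℝ) + 1) / 3 * Real.Gamma (((n:ℝ) + 1) / 3) := by
      push_cast
      exact Real.Gamma_add_one (by positivity)
    rw [h, Nat.factorial_succ]
    push_cast
    rw [show ((n:ℝ) + 1 + 1) / 3 = ((n:ℝ) + 2) / 3 by ring,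
      show ((n:ℝ) + 1 + 2) / 3 = (n:ℝ) / 3 + 1 by ring]
    calc _ = ((n:ℝ) + 1) / 3 * (Real.Gamma (((n:ℝ) + 1) / 3) * Real.Gamma (((n:ℝ) + 2) / 3) *
        Real.Gamma ((n:ℝ) / 3 + 1)) := by ring
      _ = _ := by rw [ih, pow_succ]; field_simp

lemma g56 : Real.Gamma (5/6) * Real.Gamma (1/3) = (2:ℝ) ^ ((1:ℝ)/3) * √π * Real.Gamma (2/3) := by
  have h := Real.Gamma_mul_Gamma_add_half (1/3)
  norm_num at h
  norm_num
  linarith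

lemma constLem : 2 * (6:ℝ) ^ ((1:ℝ)/3) * √π / (Real.Gamma (1/3)) ^ 2 *
    ((8/9:ℝ) ^ (-((1:ℝ)/3)) * (1/3)) * (Real.Gamma (1/3) * Real.Gamma (2/3)) =
    Real.Gamma (5/6) := by
  have hG : Real.Gamma (1/3) ≠ 0 := (Real.Gamma_pos_of_pos (by norm_num)).ne'
  have e : (6:ℝ) ^ ((1:ℝ)/3) * (8/9:ℝ) ^ (-((1:ℝ)/3)) = 3 / 2 * (2:ℝ) ^ ((1:ℝ)/3) := by
    rw [Real.rpow_neg (by norm_num), ← Real.inv_rpow (by norm_num),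
      ← Real.mul_rpow (by norm_num) (by norm_num)]
    rw [show (6 * (8/9:ℝ)⁻¹) = (3/2) ^ (3:ℝ) * 2 by norm_num,
      Real.mul_rpow (by positivity) (by norm_num), ← Real.rpow_mul (by norm_num)]
    norm_num
  have := g56
  have h2 : Real.Gamma (5/6) = (2:ℝ) ^ ((1:ℝ)/3) * √π * Real.Gamma (2/3) / Real.Gamma (1/3) := by
    rw [eq_div_iff hG, this]
  rw [h2]
  calc _ = (6:ℝ) ^ ((1:ℝ)/3) * (8/9:ℝ) ^ (-((1:ℝ)/3)) * (2 / 3 * √π / (Real.Gamma (1/3)) ^ 2 *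
     (Real.Gamma (1/3) * Real.Gamma (2/3))) := by ring
    _ = _ := by rw [e]; field_simp

lemma powLem (n : ℕ) : (8/9:ℝ) ^ (-((n:ℝ) + 1) / 3) * ((3:ℝ) ^ n)⁻¹ =
    (8/9:ℝ) ^ (-((1:ℝ)/3)) * ((2 * (3:ℝ) ^ ((1:ℝ)/3)) ^ n)⁻¹ := by
  rw [show -((n:ℝ) + 1) / 3 = -((1:ℝ)/3) + -((1:ℝ)/3) * n by ring, Real.rpow_add (by norm_num),
    Real.rpow_mul (by norm_num), Real.rpow_natCast, mul_assoc, ← inv_pow, ← inv_pow, ← mul_pow]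
  congr 2
  rw [Real.rpow_neg (by norm_num), ← mul_inv]
  congr 1
  have h27 : (27:ℝ) ^ ((1:ℝ)/3) = 3 := by
    rw [show (27:ℝ) = 3 ^ (3:ℝ) by norm_num, ← Real.rpow_mul (by norm_num)]; norm_num
  have h8 : (8:ℝ) ^ ((1:ℝ)/3) = 2 := by
    rw [show (8:ℝ) = 2 ^ (3:ℝ) by norm_num, ← Real.rpow_mul (by norm_num)]; norm_num
  rw [← h8]
  nth_rewrite 2 [← h27]
  rw [← Real.mul_rpow (by norm_num) (by norm_num), ← Real.mul_rpow (by norm_num) (by norm_num)]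
  norm_num

lemma dblInt (n : ℕ) : (∫ h in Ioi (0:ℝ), ∫ s in Ioi (0:ℝ),
      h ^ n * Real.exp (-8 * h ^ 3 / 9) *
      (Real.exp (-(8 * h ^ 3 / 9) * s) * s ^ ((1/6:ℝ) - 1) * (1 + s) ^ ((2/3:ℝ) - 1/6 - 1))) =
    (8/9:ℝ) ^ (-((n:ℝ) + 1) / 3) * (1/3) * Real.Gamma (((n:ℝ) + 1) / 3) *
    (Real.Gamma (1/6) * Real.Gamma (((n:ℝ) + 2) / 3) / Real.Gamma ((n:ℝ)/3 + 5/6)) := by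
  obtain ⟨b1, b2⟩ := betaPos (a := 1/6) (p := (n:ℝ)/3 + 5/6) (by norm_num)
    (by have : (0:ℝ) ≤ n := n.cast_nonneg
        linarith)
  have hn : (-1:ℝ) < n := by have : (0:ℝ) ≤ n := n.cast_nonneg
                             linarith
  have eqF : ∀ s > 0, ∀ h ∈ Ioi (0:ℝ), (s ^ ((1/6:ℝ) - 1) * (1 + s) ^ ((2/3:ℝ) - 1/6 - 1)) *
      (h ^ (n:ℝ) * Real.exp (-(8/9 * (1 + s)) * h ^ (3:ℝ))) =
      h ^ n * Real.exp (-8 * h ^ 3 / 9) *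
      (Real.exp (-(8 * h ^ 3 / 9) * s) * s ^ ((1/6:ℝ) - 1) * (1 + s) ^ ((2/3:ℝ) - 1/6 - 1)) := by
    intro s hs h hh
    rw [Real.rpow_natCast, show (3:ℝ) = ((3:ℕ):ℝ) by norm_num, Real.rpow_natCast]
    rw [show -(8/9 * (1 + s)) * h ^ 3 = -8 * h ^ 3 / 9 + -(8 * h ^ 3 / 9) * s by ring,
      Real.exp_add]
    push_cast
    ring
  have key := swapPos (fun h s => h ^ n * Real.exp (-8 * h ^ 3 / 9) *
      (Real.exp (-(8 * h ^ 3 / 9) * s) * s ^ ((1/6:ℝ) - 1) * (1 + s) ^ ((2/3:ℝ) - 1/6 - 1)))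
    (fun s => (8/9:ℝ) ^ (-((n:ℝ) + 1) / 3) * (1/3) * Real.Gamma (((n:ℝ) + 1) / 3) *
      (s ^ ((1/6:ℝ) - 1) * (1 + s) ^ (-((n:ℝ)/3 + 5/6))))
    (by unfold Function.uncurry; fun_prop)
    (fun x hx y hy => by positivity)
    (fun s hs => IntegrableOn.congr_fun ((integrableOn_rpow_mul_exp_neg_mul_rpow (p := 3)
        (b := 8/9 * (1 + s)) hn (by norm_num) (by positivity)).const_mul _)
        (eqF s hs) measurableSet_Ioi)
    (fun s hs => by
      have hs1 : 0 < 1 + s := by positivity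
      rw [← setIntegral_congr_fun measurableSet_Ioi (eqF s hs), integral_const_mul,
        integral_rpow_mul_exp_neg_mul_rpow (by norm_num) hn (by positivity),
        Real.mul_rpow (by norm_num) hs1.le,
        show -((n:ℝ)/3 + 5/6) = ((2/3:ℝ) - 1/6 - 1) + (-((n:ℝ) + 1) / 3) by ring,
        Real.rpow_add hs1]
      ring)
    (b1.const_mul _)
  rw [key.2, integral_const_mul, b2]
  rw [show (n:ℝ)/3 + 5/6 - 1/6 = ((n:ℝ) + 2) / 3 by ring]

lemma moment (n : ℕ) : (∫ h in Ioi (0:ℝ), h ^ n * nu2 h) =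
        Real.Gamma (5/6) * ((2 * (3:ℝ) ^ ((1:ℝ)/3)) ^ n)⁻¹ * (Nat.factorial n : ℝ) /
          (Real.Gamma ((n : ℝ)/3 + 1) * Real.Gamma ((n : ℝ)/3 + 5/6)) := by
  have hG6 : Real.Gamma (1/6) ≠ 0 := (Real.Gamma_pos_of_pos (by norm_num)).ne'
  have hA : Real.Gamma ((n:ℝ)/3 + 1) ≠ 0 := (Real.Gamma_pos_of_pos (by positivity)).ne'
  have hB : Real.Gamma ((n:ℝ)/3 + 5/6) ≠ 0 := (Real.Gamma_pos_of_pos (by positivity)).ne'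
  have h1 : (∫ h in Ioi (0:ℝ), h ^ n * nu2 h) =
      (2 * (6:ℝ) ^ ((1:ℝ)/3) * √π / (Real.Gamma (1/3)) ^ 2) * (1 / Real.Gamma (1/6)) *
      ∫ h in Ioi (0:ℝ), ∫ s in Ioi (0:ℝ), h ^ n * Real.exp (-8 * h ^ 3 / 9) *
      (Real.exp (-(8 * h ^ 3 / 9) * s) * s ^ ((1/6:ℝ) - 1) * (1 + s) ^ ((2/3:ℝ) - 1/6 - 1)) := by
    rw [← integral_const_mul]
    refine setIntegral_congr_fun measurableSet_Ioi (fun h hh => ?_)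
    simp only [nu2, tricomiU]
    rw [integral_const_mul]
    ring
  have ht := tripl n
  have hp := powLem n
  rw [h1, dblInt, ← constLem, eq_div_iff (mul_ne_zero hA hB)]
  set c := 2 * (6:ℝ) ^ ((1:ℝ)/3) * √π / (Real.Gamma (1/3)) ^ 2
  calc _ = c * (1/3) * (8/9:ℝ) ^ (-((n:ℝ) + 1) / 3) * (Real.Gamma (((n:ℝ) + 1) / 3) *
        Real.Gamma (((n:ℝ) + 2) / 3) * Real.Gamma ((n:ℝ) / 3 + 1)) := by field_simp
    _ = c * (1/3) * ((8/9:ℝ) ^ (-((n:ℝ) + 1) / 3) * ((3:ℝ) ^ n)⁻¹) * n.factorial *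
        (Real.Gamma (1/3) * Real.Gamma (2/3)) := by rw [ht]; ring
    _ = _ := by rw [hp]; ring

/-- the moments of `ν₂` are
`∫₀^∞ hⁿ·ν₂(h) dh = Γ(5/6)·(2·3^{1/3})^{-n}·n!/(Γ(n/3+1)·Γ(n/3+5/6))`;
in particular `ν₂` is a probability density on `[0,∞)`. -/
theorem stmt16 :
    (∀ n : ℕ,
      (∫ h in Ioi (0:ℝ), h ^ n * nu2 h) =
        Real.Gamma (5/6) * ((2 * (3:ℝ) ^ ((1:ℝ)/3)) ^ n)⁻¹ * (Nat.factorial n : ℝ) /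
          (Real.Gamma ((n : ℝ)/3 + 1) * Real.Gamma ((n : ℝ)/3 + 5/6))) ∧
    (∀ h : ℝ, 0 ≤ h → 0 ≤ nu2 h) ∧
    (∫ h in Ioi (0:ℝ), nu2 h) = 1 := by
  refine ⟨moment, fun h hh => ?_, ?_⟩
  · have hG3 : 0 < Real.Gamma (1/3) := Real.Gamma_pos_of_pos (by norm_num)
    have hG6 : 0 < Real.Gamma (1/6) := Real.Gamma_pos_of_pos (by norm_num)
    unfold nu2 tricomiU
    refine mul_nonneg (by positivity) (mul_nonneg (by positivity) ?_)
    refine setIntegral_nonneg measurableSet_Ioi (fun s hs => ?_)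
    have hs' : (0:ℝ) < s := hs
    positivity
  · have h := moment 0
    have hG : Real.Gamma (5/6) ≠ 0 := (Real.Gamma_pos_of_pos (by norm_num)).ne'
    simpa [hG] using h
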